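/- arXiv:2210.14608 — 2 statements merged into one kernel-verified Lean document; each statement's English description precedes it below -/
import Mathlib

section
/- Let G be an undirected graph, let t ≥ 0 and ℓ ≥ 1 be integers, let C₁, …, C_t be (not necessarily distinct) cycles of G, and let D₀, D₁, …, D_t be orientations of G such that for each i ∈ {1,…,t} the cycle C_i is directed in D_{i−1} and D_i is obtained from D_{i−1} by flipping C_i. If D_t contains a directed cycle of length greater than ℓ^{t+1}, then D₀ contains a directed cycle of length at least ℓ. -/
variable {V : Type*}

/-- `M` is the edge set of a perfect matching of `G`: a set of pairwise disjoint
edges of `G` covering every vertex. -/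
def IsPerfectMatchingSet (G : SimpleGraph V) (M : Set (Sym2 V)) : Prop :=
  M ⊆ G.edgeSet ∧ ∀ v : V, ∃! e, e ∈ M ∧ v ∈ e

/-- `C` is the edge set of a cycle of `G`. -/
def IsCycleEdgeSet (G : SimpleGraph V) (C : Set (Sym2 V)) : Prop :=
  ∃ (v : V) (w : G.Walk v v), w.IsCycle ∧ C = {e | e ∈ w.edges}

/-- `C` is a cycle of `G` whose edges alternate between the matching `M` and its
complement: at every vertex of the cycle, exactly one of the two incident cycle
edges belongs to `M`. -/
def IsAlternatingCycle (G : SimpleGraph V) (M C : Set (Sym2 V)) : Prop :=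
  IsCycleEdgeSet G C ∧
    ∀ v : V, ∀ e₁ ∈ C, ∀ e₂ ∈ C, e₁ ≠ e₂ → v ∈ e₁ → v ∈ e₂ → (e₁ ∈ M ↔ e₂ ∉ M)

/-- A set of edges that is a matching: its edges are pairwise vertex-disjoint. -/
def IsMatchingSet (M : Set (Sym2 V)) : Prop :=
  ∀ e₁ ∈ M, ∀ e₂ ∈ M, e₁ ≠ e₂ → ∀ v : V, v ∈ e₁ → v ∉ e₂

/-- `G` is bipartite with parts `A` and `B`: the two parts partition the vertex
set and each part is an independent set. -/
def IsBipartiteWith (G : SimpleGraph V) (A B : Set V) : Prop :=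
  Disjoint A B ∧ A ∪ B = Set.univ ∧
    ∀ ⦃u v⦄, G.Adj u v → ¬(u ∈ A ∧ v ∈ A) ∧ ¬(u ∈ B ∧ v ∈ B)

/-- An orientation of the undirected graph `G`: every edge of `G` gets exactly
one of its two possible directions. -/
structure GraphOrientation (G : SimpleGraph V) where
  adj : V → V → Prop
  adj_of : ∀ u v, adj u v → G.Adj u v
  eq_not_rev : ∀ u v, G.Adj u v → (adj u v ↔ ¬ adj v u)

/-- `C` is the edge set of a cycle of `G` that is consistently directed in the
orientation `D`. -/
def GraphOrientation.IsDirectedCycle {G : SimpleGraph V} (D : GraphOrientation G)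
    (C : Set (Sym2 V)) : Prop :=
  ∃ (v : V) (w : G.Walk v v), w.IsCycle ∧ C = {e | e ∈ w.edges} ∧
    ∀ d ∈ w.darts, D.adj d.toProd.1 d.toProd.2

/-- `D'` is obtained from the orientation `D` by flipping the cycle `C`:
every edge of `C` is reversed, all other edges keep their direction. -/
def GraphOrientation.IsFlip {G : SimpleGraph V} (D D' : GraphOrientation G)
    (C : Set (Sym2 V)) : Prop :=
  ∀ u v, G.Adj u v →
    ((s(u, v) ∈ C → (D'.adj u v ↔ D.adj v u)) ∧ (s(u, v) ∉ C → (D'.adj u v ↔ D.adj u v)))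

/-- The subdigraph of the digraph `D` induced on the vertex set `X` is strongly
connected: any vertex of `X` reaches any other by a directed path inside `X`. -/
def StronglyConnectedOn (D : V → V → Prop) (X : Set V) : Prop :=
  ∀ u ∈ X, ∀ v ∈ X, Relation.ReflTransGen (fun a b => D a b ∧ a ∈ X ∧ b ∈ X) u v

/-- The list `l` of vertices is a directed cycle of the digraph `D`: a cyclic
sequence of at least two distinct vertices, each consecutive pair (cyclically)
joined by an arc of `D`. The cyclically consecutive pairs of `l` are exactly the
entries of `l.zip (l.rotate 1)`. -/
def IsDirectedCycleList (D : V → V → Prop) (l : List V) : Prop :=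
  2 ≤ l.length ∧ l.Nodup ∧ ∀ p ∈ l.zip (l.rotate 1), D p.1 p.2

/-!
Of a sequence of flips leading from `D₀` to `Dᵢ`, remember only the set `W` of vertices covered by
the flipped cycles: every arc of `Dᵢ` either is an arc of `D₀` or can be rerouted in `D₀` inside
`W`. Suppose that a directed cycle `K` of `Dᵢ` has a stretch of `r` consecutive vertices outside
`W`. The arcs at these vertices are arcs of `D₀`, and rerouting the rest of `K` does not touch the
stretch, so `D₀` has a directed cycle running through the whole stretch, of length greater than `r`.

If all directed cycles of `D₀` are shorter than `ℓ` and `K` meets `W`, it follows that every vertex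
of `K` is reached in fewer than `ℓ` steps along `K` from a vertex of `W`, so that `W` and `K`
together cover at most `ℓ |W|` vertices. If `K` misses `W`, it is a directed cycle of `D₀`, and the
same bound holds as soon as `W` is nonempty. Starting from a single vertex, `W` has at most `ℓ ^ i`
vertices after `i` flips, and the last cycle has at most `ℓ ^ (t + 1)`.
-/

namespace GraphOrientation

open SimpleGraph

variable {G : SimpleGraph V} {D D' D'' : GraphOrientation G} {K C : Set (Sym2 V)} {W W' : Set V}
  {u v x y : V}

section DirectedWalks

/-- A walk of `G` all of whose steps follow the orientation `D`. -/
def IsDirectedWalk (D : GraphOrientation G) (w : G.Walk u v) : Prop :=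
  ∀ d ∈ w.darts, D.adj d.fst d.snd

lemma isDirectedWalk_nil : D.IsDirectedWalk (Walk.nil : G.Walk u u) := by
  simp [IsDirectedWalk]

lemma isDirectedWalk_cons {h : G.Adj u v} {w : G.Walk v x} :
    D.IsDirectedWalk (.cons h w) ↔ D.adj u v ∧ D.IsDirectedWalk w := by
  simp [IsDirectedWalk]

lemma isDirectedWalk_append {p : G.Walk u v} {q : G.Walk v x} :
    D.IsDirectedWalk (p.append q) ↔ D.IsDirectedWalk p ∧ D.IsDirectedWalk q := by
  simp [IsDirectedWalk, or_imp, forall_and]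

lemma IsDirectedWalk.bypass [DecidableEq V] {w : G.Walk u v} (hw : D.IsDirectedWalk w) :
    D.IsDirectedWalk w.bypass :=
  fun d hd => hw d (w.darts_bypass_subset_darts hd)

lemma exists_isDirectedWalk_along {g : ℕ → V} {i j : ℕ} (hij : i ≤ j)
    (hg : ∀ m, i ≤ m → m < j → D.adj (g m) (g (m + 1))) :
    ∃ w : G.Walk (g i) (g j), D.IsDirectedWalk w ∧ w.support = (List.Ico i (j + 1)).map g := by
  induction j, hij using Nat.le_induction with
  | base => exact ⟨.nil, isDirectedWalk_nil, by simp⟩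
  | succ j hij ih =>
    obtain ⟨w, hw, hsupp⟩ := ih fun m hm hmj => hg m hm (by lia)
    have hlast : D.adj (g j) (g (j + 1)) := hg j hij (by lia)
    refine ⟨w.concat (D.adj_of _ _ hlast), ?_, ?_⟩
    · rw [Walk.concat_eq_append, isDirectedWalk_append, isDirectedWalk_cons]
      exact ⟨hw, hlast, isDirectedWalk_nil⟩
    · rw [Walk.support_concat, hsupp, List.Ico.succ_top (n := i) (m := j + 1) (by lia)]
      simp

lemma exists_isDirectedPath_along {g : ℕ → V} {i j : ℕ} (hij : i ≤ j)
    (hg : ∀ m, i ≤ m → m < j → D.adj (g m) (g (m + 1))) (hinj : Set.InjOn g (Set.Icc i j)) :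
    ∃ w : G.Walk (g i) (g j), w.IsPath ∧ D.IsDirectedWalk w ∧ w.length = j - i ∧
      ∀ x, x ∈ w.support ↔ ∃ m ∈ Set.Icc i j, g m = x := by
  obtain ⟨w, hw, hsupp⟩ := exists_isDirectedWalk_along hij hg
  have hmem (m : ℕ) : m ∈ List.Ico i (j + 1) ↔ m ∈ Set.Icc i j := by
    rw [List.Ico.mem, Nat.lt_succ_iff, Set.mem_Icc]
  have hlen := congrArg List.length hsupp
  rw [Walk.length_support, List.length_map, List.Ico.length] at hlen
  refine ⟨w, ?_, hw, by lia, fun x => by simp only [hsupp, List.mem_map, hmem]⟩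
  rw [Walk.isPath_def, hsupp]
  exact (List.Ico.nodup _ _).map_on fun a ha b hb => hinj ((hmem a).1 ha) ((hmem b).1 hb)

end DirectedWalks

section DirectedCycles

/-- The vertices covered by a set of edges; for the edge set of a cycle, the vertices of that
cycle. -/
def coveredVerts (K : Set (Sym2 V)) : Set V :=
  {v | ∃ e ∈ K, v ∈ e}

lemma coveredVerts_edgeSet {w : G.Walk u v} (hw : ¬ w.Nil) :
    coveredVerts w.edgeSet = {x | x ∈ w.support} :=
  Set.ext fun _ => (Walk.mem_support_iff_exists_mem_edges_of_not_nil hw).symm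

lemma ncard_edgeSet_of_isTrail {w : G.Walk u v} (hw : w.IsTrail) : w.edgeSet.ncard = w.length := by
  classical
  rw [← Walk.coe_edges_toFinset, Set.ncard_coe_finset, List.toFinset_card_of_nodup hw.edges_nodup,
    Walk.length_edges]

lemma isDirectedCycle_iff : D.IsDirectedCycle K ↔
    ∃ (v : V) (w : G.Walk v v), w.IsCycle ∧ D.IsDirectedWalk w ∧ w.edgeSet = K :=
  ⟨fun ⟨v, w, hw, hK, hD⟩ => ⟨v, w, hw, hD, hK.symm⟩,
    fun ⟨v, w, hw, hD, hK⟩ => ⟨v, w, hw, hK.symm, hD⟩⟩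

lemma IsDirectedCycle.exists_zmod_param (hK : D.IsDirectedCycle K) :
    ∃ f : ZMod K.ncard → V, Function.Injective f ∧ (∀ i, D.adj (f i) (f (i + 1))) ∧
      Set.range f = coveredVerts K := by
  obtain ⟨v, w, hw, hD, rfl⟩ := isDirectedCycle_iff.1 hK
  rw [ncard_edgeSet_of_isTrail hw.isTrail, coveredVerts_edgeSet hw.not_nil]
  have hlen := hw.three_le_length
  have : NeZero w.length := ⟨by lia⟩
  have hlt (i : ZMod w.length) : i.val < w.length := i.val_lt
  have getVert_mod (k : ℕ) (hk : k ≤ w.length) : w.getVert (k % w.length) = w.getVert k := by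
    rcases hk.lt_or_eq with hk | rfl
    · rw [Nat.mod_eq_of_lt hk]
    · simp
  refine ⟨fun i => w.getVert i.val, ?_, ?_, ?_⟩
  · intro i j hij
    exact ZMod.val_injective _ (hw.getVert_injOn' (Nat.le_sub_one_of_lt (hlt i))
      (Nat.le_sub_one_of_lt (hlt j)) hij)
  · intro i
    have hsucc : w.getVert (i + 1).val = w.getVert (i.val + 1) := by
      rw [ZMod.val_add, ZMod.val_one'' (by lia), getVert_mod _ (hlt i)]
    have hi : i.val < w.darts.length := by simpa using hlt i
    have hdart := hD _ (List.getElem_mem hi)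
    rw [Walk.darts_getElem_eq_getVert] at hdart
    simpa only [hsucc] using hdart
  · ext x
    simp only [Set.mem_range, Set.mem_ofPred_eq, Walk.mem_support_iff_exists_getVert]
    constructor
    · rintro ⟨i, rfl⟩
      exact ⟨i.val, rfl, (hlt i).le⟩
    · rintro ⟨k, rfl, hk⟩
      exact ⟨k, by rw [ZMod.val_natCast, getVert_mod k hk]⟩

lemma IsDirectedCycle.three_le_ncard (hK : D.IsDirectedCycle K) : 3 ≤ K.ncard := by
  obtain ⟨v, w, hw, -, rfl⟩ := isDirectedCycle_iff.1 hK
  exact hw.three_le_length.trans_eq (ncard_edgeSet_of_isTrail hw.isTrail).symm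

lemma IsDirectedCycle.finite_coveredVerts (hK : D.IsDirectedCycle K) :
    (coveredVerts K).Finite := by
  obtain ⟨v, w, hw, -, rfl⟩ := isDirectedCycle_iff.1 hK
  exact (coveredVerts_edgeSet hw.not_nil).symm ▸ w.support.finite_toSet

lemma IsDirectedCycle.ncard_coveredVerts (hK : D.IsDirectedCycle K) :
    (coveredVerts K).ncard = K.ncard := by
  obtain ⟨f, hf, -, hrange⟩ := hK.exists_zmod_param
  rw [← hrange, Set.ncard_range_of_injective hf, Nat.card_zmod]

lemma IsDirectedCycle.exists_isDirectedWalk (hK : D.IsDirectedCycle K)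
    (hu : u ∈ coveredVerts K) (hv : v ∈ coveredVerts K) :
    ∃ w : G.Walk u v, D.IsDirectedWalk w ∧ ∀ x ∈ w.support, x ∈ coveredVerts K := by
  classical
  obtain ⟨z, c, hc, hD, rfl⟩ := isDirectedCycle_iff.1 hK
  rw [coveredVerts_edgeSet hc.not_nil] at hu hv ⊢
  refine ⟨(c.dropUntil u hu).append (c.takeUntil v hv), isDirectedWalk_append.2 ⟨?_, ?_⟩, ?_⟩
  · exact fun d hd => hD d (c.darts_dropUntil_subset_darts hu hd)
  · exact fun d hd => hD d (c.darts_takeUntil_subset_darts hv hd)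
  · intro x hx
    rcases (Walk.mem_support_append_iff _ _).1 hx with hx | hx
    · exact c.support_dropUntil_subset_support hu hx
    · exact c.support_takeUntil_subset_support hv hx

lemma exists_isDirectedCycle_of_isPath {p : G.Walk x u} (hp : p.IsPath) (hD : D.IsDirectedWalk p)
    (h : D.adj u x) : ∃ K, D.IsDirectedCycle K ∧ K.ncard = p.length + 1 := by
  have hadj := D.adj_of _ _ h
  have hlen : 2 ≤ p.length := by
    match p with
    | .nil => exact absurd rfl hadj.ne
    | .cons _ .nil => exact absurd (isDirectedWalk_cons.1 hD).1 ((D.eq_not_rev _ _ hadj).1 h)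
    | .cons _ (.cons _ _) => simp
  have hcycle : (Walk.cons hadj p).IsCycle := by
    rw [Walk.isCycle_iff_isPath_tail_and_le_length]
    exact ⟨by simpa using hp, by simpa using hlen⟩
  exact ⟨_, isDirectedCycle_iff.2 ⟨u, _, hcycle, isDirectedWalk_cons.2 ⟨h, hD⟩, rfl⟩,
    by rw [ncard_edgeSet_of_isTrail hcycle.isTrail, Walk.length_cons]⟩

lemma exists_isDirectedCycle_of_isPath_of_walk {p : G.Walk x y} {q : G.Walk y u} (hp : p.IsPath)
    (hpD : D.IsDirectedWalk p) (hqD : D.IsDirectedWalk q)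
    (hpq : ∀ z ∈ p.support, z ∈ q.support → z = y) (h : D.adj u x) :
    ∃ K, D.IsDirectedCycle K ∧ p.length < K.ncard := by
  classical
  have hpath : (p.append q.bypass).IsPath := by
    have hq := q.bypass_isPath.support_nodup
    rw [← Walk.cons_tail_support, List.nodup_cons] at hq
    rw [Walk.isPath_def, Walk.support_append, List.nodup_append']
    refine ⟨hp.support_nodup, hq.2, fun z hzp hzq => hq.1 ?_⟩
    exact hpq z hzp (q.support_bypass_subset_support (List.mem_of_mem_tail hzq)) ▸ hzq
  obtain ⟨K, hK, hcard⟩ :=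
    exists_isDirectedCycle_of_isPath hpath (isDirectedWalk_append.2 ⟨hpD, hqD.bypass⟩) h
  exact ⟨K, hK, by rw [hcard, Walk.length_append]; lia⟩

end DirectedCycles

section Rerouting

/-- Every arc of `D'` is an arc of `D` or can be replaced by a directed walk of `D` inside `W`.
This is what survives of a sequence of flips once only the set `W` of vertices covered by the
flipped cycles is remembered. -/
def ReroutesWithin (D D' : GraphOrientation G) (W : Set V) : Prop :=
  ∀ ⦃a b : V⦄, D'.adj a b →
    D.adj a b ∨ ∃ w : G.Walk a b, D.IsDirectedWalk w ∧ ∀ x ∈ w.support, x ∈ W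

lemma ReroutesWithin.refl (D : GraphOrientation G) (W : Set V) : D.ReroutesWithin D W :=
  fun _ _ h => .inl h

lemma ReroutesWithin.adj (hW : D.ReroutesWithin D' W) (h : D'.adj u v) (huv : u ∉ W ∨ v ∉ W) :
    D.adj u v := by
  refine (hW h).resolve_right ?_
  rintro ⟨w, -, hw⟩
  exact huv.elim (· (hw u w.start_mem_support)) (· (hw v w.end_mem_support))

lemma ReroutesWithin.exists_isDirectedWalk (hW : D.ReroutesWithin D' W) {p : G.Walk u v}
    (hp : D'.IsDirectedWalk p) :
    ∃ q : G.Walk u v, D.IsDirectedWalk q ∧ ∀ x ∈ q.support, x ∈ p.support ∨ x ∈ W := by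
  induction p with
  | nil => exact ⟨.nil, isDirectedWalk_nil, fun x hx => .inl hx⟩
  | cons hadj p ih =>
    obtain ⟨harc, hp⟩ := isDirectedWalk_cons.1 hp
    obtain ⟨q, hq, hqsupp⟩ := ih hp
    rcases hW harc with harc | ⟨w, hw, hwW⟩
    · exact ⟨.cons hadj q, isDirectedWalk_cons.2 ⟨harc, hq⟩, by grind [Walk.support_cons]⟩
    · exact ⟨w.append q, isDirectedWalk_append.2 ⟨hw, hq⟩,
        by grind [Walk.support_cons, Walk.mem_support_append_iff]⟩

lemma ReroutesWithin.trans (hW : D.ReroutesWithin D' W) (hW' : D'.ReroutesWithin D'' W') :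
    D.ReroutesWithin D'' (W ∪ W') := by
  intro a b h
  rcases hW' h with h | ⟨p, hp, hpW'⟩
  · exact (hW h).imp_right fun ⟨w, hw, hwW⟩ => ⟨w, hw, fun x hx => .inl (hwW x hx)⟩
  · obtain ⟨q, hq, hqsupp⟩ := hW.exists_isDirectedWalk hp
    exact .inr ⟨q, hq, fun x hx => (hqsupp x hx).symm.imp_right (hpW' x)⟩

lemma IsFlip.reroutesWithin (hflip : D.IsFlip D' C) (hC : D.IsDirectedCycle C) :
    D.ReroutesWithin D' (coveredVerts C) := by
  intro a b h
  by_cases hab : s(a, b) ∈ C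
  · exact .inr (hC.exists_isDirectedWalk ⟨_, hab, Sym2.mem_mk_left a b⟩
      ⟨_, hab, Sym2.mem_mk_right a b⟩)
  · exact .inl (((hflip a b (D'.adj_of _ _ h)).2 hab).1 h)

lemma ReroutesWithin.isDirectedCycle (hW : D.ReroutesWithin D' W) (hK : D'.IsDirectedCycle K)
    (hKW : Disjoint W (coveredVerts K)) : D.IsDirectedCycle K := by
  obtain ⟨v, w, hw, hD', rfl⟩ := isDirectedCycle_iff.1 hK
  refine isDirectedCycle_iff.2 ⟨v, w, hw, fun d hd => hW.adj (hD' d hd) (.inl ?_), rfl⟩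
  exact hKW.notMem_of_mem_right ⟨d.edge, List.mem_map_of_mem hd, Sym2.mem_mk_left _ _⟩

/-- The stretch through the gap is kept as it is; the rest of the cycle is rerouted, and since the
gap avoids `W`, the rerouted part does not meet it. -/
lemma ReroutesWithin.exists_isDirectedCycle_of_gap (hW : D.ReroutesWithin D' W) {n r : ℕ}
    {g : ℕ → V} (hg : ∀ m, D'.adj (g m) (g (m + 1))) (hinj : Set.InjOn g (Set.Ioc 0 n))
    (hclosed : g n = g 0) (hr : 0 < r) (hrn : r < n) (hgap : ∀ m, 0 < m → m ≤ r → g m ∉ W) :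
    ∃ K, D.IsDirectedCycle K ∧ r < K.ncard := by
  have hkeep : ∀ m ≤ r, D.adj (g m) (g (m + 1)) := fun m hm =>
    hW.adj (hg m) (m.eq_zero_or_pos.elim
      (fun h => .inr (hgap _ (by lia) (by lia))) (fun h => .inl (hgap m h hm)))
  obtain ⟨p, hp, hpD, hlen, hpsupp⟩ := exists_isDirectedPath_along (i := 1) (j := r + 1) (by lia)
    (fun m _ _ => hkeep m (by lia))
    (hinj.mono <| (Set.Icc_subset_Ioc_iff (by lia)).2 ⟨one_pos, hrn⟩)
  obtain ⟨q', -, hq'D, -, hq'supp⟩ := exists_isDirectedPath_along hrn (fun m _ _ => hg m)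
    (hinj.mono <| (Set.Icc_subset_Ioc_iff hrn).2 ⟨r.succ_pos, le_rfl⟩)
  obtain ⟨q, hqD, hqsupp⟩ := hW.exists_isDirectedWalk hq'D
  have hpq : ∀ z ∈ p.support, z ∈ q.support → z = g (r + 1) := by
    intro z hzp hzq
    obtain ⟨i, ⟨hi, hir⟩, rfl⟩ := (hpsupp z).1 hzp
    rcases hir.lt_or_eq with hir | rfl
    · have hzq' := (hqsupp _ hzq).resolve_right (hgap i hi (by lia))
      obtain ⟨j, ⟨hj, hjn⟩, hji⟩ := (hq'supp _).1 hzq'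
      have := hinj ⟨by lia, by lia⟩ ⟨by lia, by lia⟩ hji
      lia
    · rfl
  simpa only [hlen, Nat.add_sub_cancel] using
    exists_isDirectedCycle_of_isPath_of_walk hp hpD hqD hpq (hclosed ▸ hkeep 0 r.zero_le)

end Rerouting

section Counting

lemma le_card_mul_of_gap_lt {n ℓ : ℕ} [NeZero n] {S : Finset (ZMod n)} (hS : S.Nonempty)
    (hgap : ∀ a ∈ S, ∀ r < n, (∀ m : ℕ, 0 < m → m ≤ r → a + m ∉ S) → r < ℓ) :
    n ≤ S.card * ℓ := by
  classical
  obtain ⟨s, hs⟩ := hS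
  suffices h : Finset.univ ⊆ Finset.image₂ (fun a (m : ℕ) => a + (m : ZMod n)) S (Finset.range ℓ) by
    simpa using (Finset.card_le_card h).trans (Finset.card_image₂_le _ _ _)
  intro j _
  have hback : j - ((j - s).val : ℕ) ∈ S := by simpa using hs
  have hex : ∃ r : ℕ, j - r ∈ S := ⟨_, hback⟩
  let r := Nat.find hex
  have hr : r < ℓ := by
    refine hgap (j - r) (Nat.find_spec hex) r
      ((Nat.find_min' hex hback).trans_lt (ZMod.val_lt _)) fun m hm hmr => ?_
    have := Nat.find_min hex (m := r - m) (by lia)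
    rwa [Nat.cast_sub hmr, ← sub_add] at this
  exact Finset.mem_image₂.2 ⟨j - r, Nat.find_spec hex, r, Finset.mem_range.2 hr, by simp⟩

variable {ℓ : ℕ}

lemma ReroutesWithin.ncard_le_of_inter_nonempty (hW : D.ReroutesWithin D' W) (hℓ : 0 < ℓ)
    (hshort : ∀ K, D.IsDirectedCycle K → K.ncard < ℓ) (hK : D'.IsDirectedCycle K)
    (hKW : (W ∩ coveredVerts K).Nonempty) :
    K.ncard ≤ (W ∩ coveredVerts K).ncard * ℓ := by
  classical
  obtain ⟨f, hf, hadj, hrange⟩ := hK.exists_zmod_param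
  have : NeZero K.ncard := ⟨by have := hK.three_le_ncard; lia⟩
  let S : Finset (ZMod K.ncard) := {i | f i ∈ W}
  have himage : f '' S = W ∩ coveredVerts K := by
    rw [← hrange, ← Set.image_preimage_eq_inter_range]
    simp [S, Set.preimage]
  rw [← himage] at hKW ⊢
  rw [Set.ncard_image_of_injective _ hf, Set.ncard_coe_finset]
  refine le_card_mul_of_gap_lt (by simpa using hKW) fun a _ r hr hgap => ?_
  rcases r.eq_zero_or_pos with rfl | hr0
  · exact hℓ
  have hinj : Set.InjOn (fun m : ℕ => f (a + m)) (Set.Ioc 0 K.ncard) := by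
    intro i hi j hj hij
    have hmod : i ≡ j [MOD K.ncard] := by
      simpa [ZMod.natCast_eq_natCast_iff] using hf hij
    refine hmod.eq_of_abs_lt ?_
    rw [Set.mem_Ioc] at hi hj
    rw [abs_lt]
    lia
  obtain ⟨L, hL, hrL⟩ := hW.exists_isDirectedCycle_of_gap (n := K.ncard)
    (fun m => by simpa [add_assoc] using hadj (a + m)) hinj (by simp) hr0 hr
    fun m hm hmr => by simpa [S] using hgap m hm hmr
  exact hrL.trans (hshort L hL)

lemma ReroutesWithin.ncard_union_le (hW : D.ReroutesWithin D' W) (hℓ : 0 < ℓ)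
    (hshort : ∀ K, D.IsDirectedCycle K → K.ncard < ℓ) (hK : D'.IsDirectedCycle K)
    (hfin : W.Finite) (hne : W.Nonempty) :
    (W ∪ coveredVerts K).ncard ≤ W.ncard * ℓ := by
  have hunion := Set.ncard_union_add_ncard_inter W (coveredVerts K) hfin hK.finite_coveredVerts
  rw [hK.ncard_coveredVerts] at hunion
  rcases (W ∩ coveredVerts K).eq_empty_or_nonempty with hKW | hKW
  · have hlt := hshort K (hW.isDirectedCycle hK (Set.disjoint_iff_inter_eq_empty.2 hKW))
    have hpos : 0 < W.ncard := (Set.ncard_pos hfin).2 hne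
    rw [hKW, Set.ncard_empty] at hunion
    nlinarith
  · have hle := hW.ncard_le_of_inter_nonempty hℓ hshort hK hKW
    have hinter : (W ∩ coveredVerts K).ncard ≤ W.ncard :=
      Set.ncard_le_ncard Set.inter_subset_left hfin
    nlinarith

end Counting

end GraphOrientation

open GraphOrientation in
theorem directed_cycle_after_flips_general (G : SimpleGraph V) (t ℓ : ℕ) (hℓ : 1 ≤ ℓ)
    (C : Fin t → Set (Sym2 V)) (D : Fin (t + 1) → GraphOrientation G)
    (hcyc : ∀ i : Fin t, (D i.castSucc).IsDirectedCycle (C i))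
    (hflip : ∀ i : Fin t, GraphOrientation.IsFlip (D i.castSucc) (D i.succ) (C i))
    (K : Set (Sym2 V)) (hK : (D (Fin.last t)).IsDirectedCycle K)
    (hKlen : ℓ ^ (t + 1) < K.ncard) :
    ∃ K₀ : Set (Sym2 V), (D 0).IsDirectedCycle K₀ ∧ ℓ ≤ K₀.ncard := by
  by_contra! hshort
  have hreroute (i : Fin (t + 1)) : ∃ W : Set V, W.Finite ∧ W.Nonempty ∧ W.ncard ≤ ℓ ^ i.val ∧
      (D 0).ReroutesWithin (D i) W := by
    induction i using Fin.induction with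
    | zero =>
      obtain ⟨v, -⟩ := hK
      exact ⟨{v}, Set.finite_singleton v, Set.singleton_nonempty v, by simp, .refl _ _⟩
    | succ i ih =>
      obtain ⟨W, hfin, hne, hcard, hW⟩ := ih
      refine ⟨W ∪ coveredVerts (C i), hfin.union (hcyc i).finite_coveredVerts, hne.inl, ?_,
        hW.trans ((hflip i).reroutesWithin (hcyc i))⟩
      exact (hW.ncard_union_le hℓ hshort (hcyc i) hfin hne).trans (Nat.mul_le_mul_right ℓ hcard)
  obtain ⟨W, hfin, hne, hcard, hW⟩ := hreroute (Fin.last t)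
  refine hKlen.not_ge ?_
  calc K.ncard = (coveredVerts K).ncard := hK.ncard_coveredVerts.symm
    _ ≤ (W ∪ coveredVerts K).ncard :=
      Set.ncard_le_ncard Set.subset_union_right (hfin.union hK.finite_coveredVerts)
    _ ≤ W.ncard * ℓ := hW.ncard_union_le hℓ hshort hK hfin hne
    _ ≤ ℓ ^ (t + 1) := Nat.mul_le_mul_right ℓ hcard

/-- Let `D₀, …, D_t` be orientations of a graph `G` such that
`D_i` is obtained from `D_{i-1}` by flipping a cycle `C_i` directed in `D_{i-1}`.
If `D_t` contains a directed cycle of length greater than `ℓ^(t+1)` (with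
`ℓ ≥ 1`), then `D₀` contains a directed cycle of length at least `ℓ`. -/
theorem directed_cycle_after_flips
    {V : Type*} [Fintype V] (G : SimpleGraph V) (t ℓ : ℕ) (hℓ : 1 ≤ ℓ)
    (C : Fin t → Set (Sym2 V)) (D : Fin (t + 1) → GraphOrientation G)
    (hcyc : ∀ i : Fin t, (D i.castSucc).IsDirectedCycle (C i))
    (hflip : ∀ i : Fin t, GraphOrientation.IsFlip (D i.castSucc) (D i.succ) (C i))
    (K : Set (Sym2 V)) (hK : (D (Fin.last t)).IsDirectedCycle K)
    (hKlen : ℓ ^ (t + 1) < K.ncard) :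
    ∃ K₀ : Set (Sym2 V), (D 0).IsDirectedCycle K₀ ∧ ℓ ≤ K₀.ncard := by
  exact directed_cycle_after_flips_general G t ℓ hℓ C D hcyc hflip K hK hKlen
end

section
/- For all integers k ≥ 2 and t ≥ 1 there exist an undirected graph G, cycles C₁, …, C_t of G, and orientations D₀, D₁, …, D_t of G such that for each i ∈ {1,…,t} the cycle C_i is directed in D_{i−1} and D_i is obtained from D_{i−1} by flipping C_i, every directed cycle of D₀ has length at most 2k, and D_t contains a directed cycle of length at least k·(k−1)^{t−1}·(2k−1). -/
variable {V : Type*}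

/-!
Start from a directed cycle of length `2k` in which every other arc is marked. A stage of the
construction attaches, for every marked arc `(p, h)`, a new path with `2k - 2` interior vertices
from `h` to `p`, which closes up to a directed `2k`-cycle with that arc. No other arc of the
original orientation leaves `p`, so a directed cycle entering the path cannot leave this `2k`-cycle,
and no longer directed cycle appears.

Suppose that after the previous flips the orientation has a long directed cycle `c` through all the
marked arcs. Once `c` is flipped as well, every marked arc points from `h` to `p` and can be
replaced in the reversal of `c` by the path attached to it. The rerouted cycle therefore has at
least `2k - 1` vertices for each marked arc, and every other arc between the interior vertices of a
path is marked for the next stage, which makes `k - 1` new marked arcs for each old one.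
-/

section CyclicArcs

variable {W : Type*}

/-- The arcs `(u, v)` of the cyclic list `l`, closed up by the arc from its last entry to its
first, as in `IsDirectedCycleList`. -/
def cyclicArcs (l : List V) : List (V × V) :=
  l.zip (l.rotate 1)

theorem cyclicArcs_cons (x : V) (l : List V) :
    cyclicArcs (x :: l) = (x :: l).zip (l ++ [x]) := by
  simp [cyclicArcs]

theorem isChain_cons_append_iff_forall_cyclicArcs {R : V → V → Prop} {x : V} {l : List V} :
    (x :: l ++ [x]).IsChain R ↔ ∀ p ∈ cyclicArcs (x :: l), R p.1 p.2 := by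
  rw [List.isChain_cons_append_singleton_iff_forall₂, List.forall₂_iff_zip, cyclicArcs_cons]
  simp

theorem mem_left_of_mem_cyclicArcs {l : List V} {u v : V} (h : (u, v) ∈ cyclicArcs l) : u ∈ l :=
  (List.of_mem_zip h).1

theorem mem_right_of_mem_cyclicArcs {l : List V} {u v : V} (h : (u, v) ∈ cyclicArcs l) : v ∈ l :=
  List.mem_rotate.mp (List.of_mem_zip h).2

theorem mem_cyclicArcs_map {f : V → W} {l : List V} {p : W × W} :
    p ∈ cyclicArcs (l.map f) ↔ ∃ u v, (u, v) ∈ cyclicArcs l ∧ (f u, f v) = p := by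
  simp [cyclicArcs, ← List.map_rotate, List.zip_map]

theorem mem_cyclicArcs_iff_formPerm [DecidableEq V] {l : List V} (hl : l.Nodup) {u v : V} :
    (u, v) ∈ cyclicArcs l ↔ u ∈ l ∧ l.formPerm u = v := by
  simp only [cyclicArcs, List.mem_iff_getElem, List.getElem_zip, List.getElem_rotate,
    Prod.mk.injEq, List.length_zip, List.length_rotate, min_self]
  constructor
  · rintro ⟨i, hi, rfl, rfl⟩
    exact ⟨⟨i, hi, rfl⟩, List.formPerm_apply_getElem l hl i hi⟩
  · rintro ⟨⟨i, hi, rfl⟩, rfl⟩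
    exact ⟨i, hi, rfl, (List.formPerm_apply_getElem l hl i hi).symm⟩

theorem mem_cyclicArcs_reverse {l : List V} (hl : l.Nodup) {u v : V} :
    (u, v) ∈ cyclicArcs l.reverse ↔ (v, u) ∈ cyclicArcs l := by
  classical
  rw [mem_cyclicArcs_iff_formPerm hl, mem_cyclicArcs_iff_formPerm (List.nodup_reverse.mpr hl),
    List.formPerm_reverse, Equiv.Perm.inv_eq_iff_eq, List.mem_reverse]
  constructor <;> rintro ⟨h, rfl⟩ <;> simpa [List.formPerm_mem_iff_mem] using h

theorem exists_mem_cyclicArcs_of_mem {l : List V} (hl : l.Nodup) {v : V} (hv : v ∈ l) :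
    ∃ u, (u, v) ∈ cyclicArcs l := by
  classical
  exact ⟨l.formPerm⁻¹ v, (mem_cyclicArcs_iff_formPerm hl).mpr
    ⟨List.formPerm_mem_iff_mem.mp (by simpa using hv), by simp⟩⟩

theorem eq_of_mem_cyclicArcs {l : List V} (hl : l.Nodup) {u v w : V}
    (hv : (u, v) ∈ cyclicArcs l) (hw : (u, w) ∈ cyclicArcs l) : v = w := by
  classical
  rw [mem_cyclicArcs_iff_formPerm hl] at hv hw
  exact hv.2.symm.trans hw.2

theorem forall_mem_of_cyclicArcs_closed {l : List V} (hl : l.Nodup) {P : V → Prop}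
    (hP : ∀ u v, (u, v) ∈ cyclicArcs l → P u → P v) {x : V} (hx : x ∈ l) (hPx : P x) :
    ∀ y ∈ l, P y := by
  classical
  intro y hy
  obtain ⟨n, rfl⟩ := hl.isCycleOn_formPerm.exists_pow_eq' l.finite_toSet hx hy
  clear hy
  suffices h : (l.formPerm ^ n) x ∈ l ∧ P ((l.formPerm ^ n) x) from h.2
  induction n with
  | zero => exact ⟨hx, hPx⟩
  | succ n ih =>
    rw [pow_succ', Equiv.Perm.mul_apply]
    exact ⟨List.formPerm_apply_mem_of_mem ih.1,
      hP _ _ ((mem_cyclicArcs_iff_formPerm hl).mpr ⟨ih.1, rfl⟩) ih.2⟩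

theorem isDirectedCycleList_map {R : W → W → Prop} {f : V → W} (hf : Function.Injective f)
    {l : List V} :
    IsDirectedCycleList R (l.map f) ↔ IsDirectedCycleList (fun u v ↦ R (f u) (f v)) l := by
  have arcs_iff : (∀ p ∈ cyclicArcs (l.map f), R p.1 p.2) ↔
      ∀ p ∈ cyclicArcs l, R (f p.1) (f p.2) := by
    simp only [mem_cyclicArcs_map]
    aesop
  rw [IsDirectedCycleList, IsDirectedCycleList, List.length_map, List.nodup_map_iff hf]
  exact and_congr_right' (and_congr_right' arcs_iff)

theorem isDirectedCycleList_flatMap {R : W → W → Prop} {l : List V} (hl : 2 ≤ l.length)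
    {f : V → List W} (hne : ∀ v ∈ l, f v ≠ [])
    (hnd : (l.flatMap f).Nodup) (hchain : ∀ v ∈ l, (f v).IsChain R)
    (hlink : ∀ u v, (u, v) ∈ cyclicArcs l →
      ∀ x ∈ (f u).getLast?, ∀ y ∈ (f v).head?, R x y) :
    IsDirectedCycleList R (l.flatMap f) := by
  have hlen : l.length ≤ (l.flatMap f).length := by
    simpa [List.length_flatMap] using List.length_le_sum_of_one_le (l.map (fun v ↦ (f v).length))
      (by simpa [Nat.one_le_iff_ne_zero] using hne)
  refine ⟨hl.trans hlen, hnd, ?_⟩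
  obtain _ | ⟨a, l⟩ := l
  · simp
  obtain ⟨b, m, hb⟩ := List.exists_cons_of_ne_nil (hne a List.mem_cons_self)
  have hclosed : ((a :: l ++ [a]).flatMap f).IsChain R := by
    rw [List.flatMap, List.isChain_flatten (by grind)]
    refine ⟨by grind, ?_⟩
    rw [List.isChain_map]
    exact isChain_cons_append_iff_forall_cyclicArcs.mpr fun p hp ↦ hlink p.1 p.2 hp
  have hprefix : (a :: l).flatMap f ++ [b] <+: (a :: l ++ [a]).flatMap f := by
    simp [hb]
  have := hclosed.prefix hprefix
  simp only [List.flatMap_cons, hb, List.cons_append] at this ⊢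
  exact isChain_cons_append_iff_forall_cyclicArcs.mp this

end CyclicArcs

section Flip

/-- The digraph obtained from `R` by reversing every arc of the cyclic list `l`. -/
def flipArcs (R : V → V → Prop) (l : List V) (u v : V) : Prop :=
  (v, u) ∈ cyclicArcs l ∨ R u v ∧ (u, v) ∉ cyclicArcs l

theorem flipArcs_iff_of_notMem_left {R : V → V → Prop} {l : List V} {u v : V} (hu : u ∉ l) :
    flipArcs R l u v ↔ R u v := by
  have huv := mt (mem_left_of_mem_cyclicArcs (v := v)) hu
  have hvu := mt (mem_right_of_mem_cyclicArcs (u := v)) hu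
  simp only [flipArcs, huv, hvu, not_false_eq_true, and_true, false_or]

theorem flipArcs_iff_of_notMem_right {R : V → V → Prop} {l : List V} {u v : V} (hv : v ∉ l) :
    flipArcs R l u v ↔ R u v := by
  have huv := mt (mem_right_of_mem_cyclicArcs (u := u)) hv
  have hvu := mt (mem_left_of_mem_cyclicArcs (v := u)) hv
  simp only [flipArcs, huv, hvu, not_false_eq_true, and_true, false_or]

/-- `FlipsTo R t S`: flipping `t` successive directed cycles turns the digraph `R` into `S`. -/
inductive FlipsTo (R : V → V → Prop) : ℕ → (V → V → Prop) → Prop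
  | refl : FlipsTo R 0 R
  | flip {t : ℕ} {S : V → V → Prop} {l : List V} :
      FlipsTo R t S → IsDirectedCycleList S l → FlipsTo R (t + 1) (flipArcs S l)

theorem IsDirectedCycleList.three_le_length {R : V → V → Prop} [Std.Asymm R] {l : List V}
    (hl : IsDirectedCycleList R l) : 3 ≤ l.length := by
  obtain ⟨hlen, -, harcs⟩ := hl
  match l with
  | [] | [_] => simp at hlen
  | [a, b] =>
    have hab : R a b := harcs (a, b) (by simp)
    have hba : R b a := harcs (b, a) (by simp)
    exact absurd hba (Std.Asymm.asymm a b hab)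
  | _ :: _ :: _ :: _ => simp

theorem IsDirectedCycleList.length_le_of_subset {R : V → V → Prop} {l s : List V}
    (hl : IsDirectedCycleList R l) (h : l ⊆ s) : l.length ≤ s.length :=
  (List.subperm_of_subset hl.2.1 h).length_le

end Flip

section Orientation

variable {G : SimpleGraph V}

/-- The edges underlying the arcs of the cyclic list `l`. -/
def cyclicEdges (l : List V) : Set (Sym2 V) :=
  {e | ∃ p ∈ cyclicArcs l, s(p.1, p.2) = e}

theorem mk_mem_cyclicEdges {l : List V} {u v : V} :
    s(u, v) ∈ cyclicEdges l ↔ (u, v) ∈ cyclicArcs l ∨ (v, u) ∈ cyclicArcs l := by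
  simp only [cyclicEdges, Set.mem_ofPred_eq, Prod.exists, Sym2.eq_iff]
  grind

theorem map_toProd_darts_eq_cyclicArcs {x : V} {l : List V} {w : G.Walk x x}
    (hw : w.support = x :: l ++ [x]) : w.darts.map (·.toProd) = cyclicArcs (x :: l) := by
  have hfst : w.darts.map (·.fst) = x :: l := by
    rw [w.map_fst_darts, hw, List.dropLast_concat]
  have hsnd : w.darts.map (·.snd) = l ++ [x] := by
    rw [w.map_snd_darts, hw, List.cons_append, List.tail_cons]
  rw [cyclicArcs_cons, ← hfst, ← hsnd, List.zip_map']

theorem forall_darts_iff_forall_cyclicArcs {R : V → V → Prop} {x : V} {l : List V}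
    {w : G.Walk x x} (hw : w.support = x :: l ++ [x]) :
    (∀ d ∈ w.darts, R d.fst d.snd) ↔ ∀ p ∈ cyclicArcs (x :: l), R p.1 p.2 := by
  rw [← map_toProd_darts_eq_cyclicArcs hw, List.forall_mem_map]

theorem setOf_mem_edges_eq_cyclicEdges {x : V} {l : List V} {w : G.Walk x x}
    (hw : w.support = x :: l ++ [x]) : {e | e ∈ w.edges} = cyclicEdges (x :: l) := by
  ext e
  simp [cyclicEdges, ← map_toProd_darts_eq_cyclicArcs hw, SimpleGraph.Walk.edges,
    SimpleGraph.Dart.edge]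

theorem ncard_setOf_mem_edges {x : V} {w : G.Walk x x} (hw : w.IsCycle) :
    {e | e ∈ w.edges}.ncard = w.length := by
  classical
  rw [← List.coe_toFinset, Set.ncard_coe_finset,
    List.toFinset_card_of_nodup hw.isTrail.edges_nodup, SimpleGraph.Walk.length_edges]

theorem exists_walk_support_eq {x : V} {l : List V} (h : (x :: l ++ [x]).IsChain G.Adj) :
    ∃ w : G.Walk x x, w.support = x :: l ++ [x] :=
  ⟨(SimpleGraph.Walk.ofSupport (x :: l ++ [x]) (List.cons_ne_nil x _) h).copy
      (List.head_cons ..) (List.getLast_concat ..),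
    (SimpleGraph.Walk.support_copy ..).trans (SimpleGraph.Walk.support_ofSupport _ h)⟩

namespace GraphOrientation

variable (D : GraphOrientation G)

instance : Std.Asymm D.adj :=
  ⟨fun u v h ↦ (D.eq_not_rev u v (D.adj_of u v h)).mp h⟩

variable {D}

theorem IsDirectedCycle.exists_list {K : Set (Sym2 V)} (hK : D.IsDirectedCycle K) :
    ∃ l, IsDirectedCycleList D.adj l ∧ l.length = K.ncard := by
  obtain ⟨x, w, hw, rfl, hdarts⟩ := hK
  have hlen := hw.three_le_length
  obtain ⟨l, hl⟩ : ∃ l, w.support = x :: l ++ [x] := by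
    cases w with
    | nil => simp at hlen
    | cons _ p => exact ⟨p.support.dropLast, by simp⟩
  have hl_len : (x :: l).length = w.length := by
    simpa [hl] using w.length_support
  have hnd : (x :: l).Nodup := by
    simpa only [hl, List.dropLast_concat] using hw.nodup_dropLast_support
  exact ⟨x :: l, ⟨by omega, hnd, (forall_darts_iff_forall_cyclicArcs hl).mp hdarts⟩,
    by rw [hl_len, ncard_setOf_mem_edges hw]⟩

end GraphOrientation

theorem IsDirectedCycleList.exists_isCycle {D : GraphOrientation G} {l : List V}
    (hl : IsDirectedCycleList D.adj l) :
    ∃ (x : V) (w : G.Walk x x), w.IsCycle ∧ cyclicEdges l = {e | e ∈ w.edges} ∧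
      w.length = l.length ∧ ∀ d ∈ w.darts, D.adj d.fst d.snd := by
  have hlen := hl.three_le_length
  obtain ⟨-, hnd, harcs⟩ := hl
  obtain _ | ⟨x, l⟩ := l
  · simp at hlen
  obtain ⟨w, hw⟩ := exists_walk_support_eq
    (isChain_cons_append_iff_forall_cyclicArcs.mpr fun p hp ↦ D.adj_of _ _ (harcs p hp))
  have hw_len : w.length = (x :: l).length := by
    simpa [hw] using w.length_support.symm
  have hw_nil : ¬ w.Nil := by
    rw [← SimpleGraph.Walk.length_eq_zero_iff]
    omega
  have hw_cycle : w.IsCycle := by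
    rw [SimpleGraph.Walk.isCycle_iff_isPath_tail_and_le_length, SimpleGraph.Walk.isPath_def,
      SimpleGraph.Walk.support_tail_of_not_nil w hw_nil, hw]
    exact ⟨(List.perm_append_singleton x l).nodup_iff.mpr hnd, by omega⟩
  exact ⟨x, w, hw_cycle, (setOf_mem_edges_eq_cyclicEdges hw).symm, hw_len,
    (forall_darts_iff_forall_cyclicArcs hw).mpr harcs⟩

namespace GraphOrientation

theorem isDirectedCycle_cyclicEdges {D : GraphOrientation G} {l : List V}
    (hl : IsDirectedCycleList D.adj l) : D.IsDirectedCycle (cyclicEdges l) := by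
  obtain ⟨x, w, hw, hedges, -, hdarts⟩ := hl.exists_isCycle
  exact ⟨x, w, hw, hedges, hdarts⟩

theorem ncard_cyclicEdges {D : GraphOrientation G} {l : List V}
    (hl : IsDirectedCycleList D.adj l) : (cyclicEdges l).ncard = l.length := by
  obtain ⟨x, w, hw, hedges, hlen, -⟩ := hl.exists_isCycle
  rw [hedges, ncard_setOf_mem_edges hw, hlen]

/-- The orientation obtained from `D` by flipping the directed cycle `l`. -/
def flip (D : GraphOrientation G) {l : List V} (hl : IsDirectedCycleList D.adj l) :
    GraphOrientation G where
  adj := flipArcs D.adj l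
  adj_of u v := by
    rintro (h | h)
    · exact (D.adj_of v u (hl.2.2 _ h)).symm
    · exact D.adj_of u v h.1
  eq_not_rev u v huv := by
    have huv' := D.eq_not_rev u v huv
    have arc (u v) : (u, v) ∈ cyclicArcs l → D.adj u v := hl.2.2 (u, v)
    have := arc u v
    have := arc v u
    unfold flipArcs
    tauto

theorem isFlip_flip (D : GraphOrientation G) {l : List V} (hl : IsDirectedCycleList D.adj l) :
    IsFlip D (D.flip hl) (cyclicEdges l) := by
  intro u v huv
  have huv' := D.eq_not_rev u v huv
  have arc (u v) : (u, v) ∈ cyclicArcs l → D.adj u v := hl.2.2 (u, v)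
  have := arc u v
  have := arc v u
  rw [mk_mem_cyclicEdges]
  change (_ → (flipArcs D.adj l u v ↔ _)) ∧ (_ → (flipArcs D.adj l u v ↔ _))
  unfold flipArcs
  tauto

/-- An asymmetric relation as an orientation of its underlying undirected graph. -/
def ofAsymm (R : V → V → Prop) [Std.Asymm R] : GraphOrientation (SimpleGraph.fromRel R) where
  adj := R
  adj_of u v h := ⟨ne_of_irrefl h, Or.inl h⟩
  eq_not_rev u v h := by
    have := Std.Asymm.asymm (r := R) u v
    have := Std.Asymm.asymm (r := R) v u
    have := h.2
    tauto

end GraphOrientation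

theorem FlipsTo.exists_orientations {D₀ : GraphOrientation G} {t : ℕ} {S : V → V → Prop}
    (h : FlipsTo D₀.adj t S) :
    ∃ (C : Fin t → Set (Sym2 V)) (D : Fin (t + 1) → GraphOrientation G),
      D 0 = D₀ ∧ (D (Fin.last t)).adj = S ∧
      ∀ i : Fin t, (D i.castSucc).IsDirectedCycle (C i) ∧
        GraphOrientation.IsFlip (D i.castSucc) (D i.succ) (C i) := by
  induction h with
  | refl => exact ⟨Fin.elim0, fun _ ↦ D₀, rfl, rfl, fun i ↦ i.elim0⟩
  | @flip t S l _ hl ih =>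
    obtain ⟨C, D, hD₀, rfl, hflip⟩ := ih
    refine ⟨Fin.snoc C (cyclicEdges l), Fin.snoc D ((D (Fin.last t)).flip hl), ?_, ?_, ?_⟩
    · rw [← Fin.castSucc_zero, Fin.snoc_castSucc, hD₀]
    · rw [Fin.snoc_last]
      rfl
    · refine Fin.lastCases ?_ fun i ↦ ?_
      · simpa only [Fin.succ_last, Fin.snoc_castSucc, Fin.snoc_last] using
          ⟨GraphOrientation.isDirectedCycle_cyclicEdges hl, (D (Fin.last t)).isFlip_flip hl⟩
      · simpa only [Fin.succ_castSucc, Fin.snoc_castSucc] using hflip i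

end Orientation

section AttachPaths

variable {ι : Type*} {N t : ℕ} {R S : V → V → Prop} {tail head : ι → V} {c : List V}

/-- The digraph obtained from `R` by attaching, for every `i`, a path
`head i → (i, 0) → ⋯ → (i, N - 1) → tail i` with `N` new interior vertices. -/
def attachPaths (R : V → V → Prop) (tail head : ι → V) (N : ℕ) :
    V ⊕ ι × Fin N → V ⊕ ι × Fin N → Prop
  | .inl u, .inl v => R u v
  | .inl u, .inr (i, j) => u = head i ∧ j.val = 0
  | .inr (i, j), .inl v => v = tail i ∧ j.val + 1 = N
  | .inr (i, j), .inr (i', j') => i = i' ∧ j.val + 1 = j'.val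

/-- The vertices, except for the last one, of the path attached at `head i` by `attachPaths`. -/
def attachedPath (head : ι → V) (N : ℕ) (i : ι) : List (V ⊕ ι × Fin N) :=
  .inl (head i) :: (List.finRange N).map fun j ↦ .inr (i, j)

theorem attachPaths_asymm [Std.Asymm R] (hne : ∀ i j, tail i ≠ head j) :
    Std.Asymm (attachPaths R tail head N) := by
  refine ⟨?_⟩
  rintro (u | ⟨i, j⟩) (v | ⟨i', j'⟩) h h'
  · exact Std.Asymm.asymm (r := R) u v h h'
  · exact hne _ _ (h'.1.symm.trans h.1)
  · exact hne _ _ (h.1.symm.trans h'.1)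
  · have := h.2
    have := h'.2
    omega

theorem attachPaths_flipArcs (l : List V) :
    attachPaths (flipArcs S l) tail head N =
      flipArcs (attachPaths S tail head N) (l.map .inl) := by
  funext x y
  rcases x with u | ⟨i, j⟩ <;> rcases y with v | ⟨i', j'⟩ <;>
    simp [attachPaths, flipArcs, mem_cyclicArcs_map]

theorem FlipsTo.attachPaths (h : FlipsTo R t S) :
    FlipsTo (attachPaths R tail head N) t (attachPaths S tail head N) := by
  induction h with
  | refl => exact .refl
  | flip _ hl ih =>
    rw [attachPaths_flipArcs]
    exact ih.flip ((isDirectedCycleList_map Sum.inl_injective).mpr hl)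

theorem exists_entering_mem_cyclicArcs {l : List (V ⊕ ι × Fin N)}
    (hl : IsDirectedCycleList (attachPaths R tail head N) l) {i : ι} {j : Fin N}
    (hj : .inr (i, j) ∈ l) :
    ∃ j₀ : Fin N, (.inl (head i), .inr (i, j₀)) ∈ cyclicArcs l := by
  obtain ⟨j, hjN⟩ := j
  induction j with
  | zero =>
    obtain ⟨u | ⟨i', j'⟩, hu⟩ := exists_mem_cyclicArcs_of_mem hl.2.1 hj
    · obtain ⟨rfl, -⟩ : u = head i ∧ _ := hl.2.2 _ hu
      exact ⟨_, hu⟩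
    · exact absurd (hl.2.2 _ hu).2 (Nat.succ_ne_zero _)
  | succ j ih =>
    obtain ⟨u | ⟨i', j'⟩, hu⟩ := exists_mem_cyclicArcs_of_mem hl.2.1 hj
    · exact absurd (hl.2.2 _ hu).2 (Nat.succ_ne_zero _)
    · obtain ⟨rfl, hj'⟩ : i' = i ∧ j'.val + 1 = j + 1 := hl.2.2 _ hu
      refine ih (by omega) ?_
      rw [show (⟨j, by omega⟩ : Fin N) = j' from Fin.ext (by simp; omega)]
      exact mem_left_of_mem_cyclicArcs hu

theorem mem_attachedPath_inr (i : ι) (j : Fin N) : .inr (i, j) ∈ attachedPath head N i := by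
  simp [attachedPath]

/-- A directed cycle entering an attached path can only run through it to `tail i`, then to
`head i`, where it closes up. -/
theorem subset_of_inr_mem {l : List (V ⊕ ι × Fin N)}
    (hl : IsDirectedCycleList (attachPaths R tail head N) l)
    (htail : ∀ i v, R (tail i) v → v = head i) (hne : ∀ i j, tail i ≠ head j)
    {i : ι} {j : Fin N} (hj : .inr (i, j) ∈ l) :
    l ⊆ .inl (tail i) :: attachedPath head N i := by
  obtain ⟨j₀, hj₀⟩ := exists_entering_mem_cyclicArcs hl hj
  refine forall_mem_of_cyclicArcs_closed hl.2.1 (fun u v huv hu ↦ ?_) hj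
    (List.mem_cons_of_mem _ (mem_attachedPath_inr i j))
  have huv' := hl.2.2 _ huv
  rw [attachedPath, List.mem_cons, List.mem_cons, List.mem_map] at hu
  obtain rfl | rfl | ⟨j', -, rfl⟩ := hu
  · rcases v with v | ⟨i', j'⟩
    · simp [attachedPath, htail i v huv']
    · exact absurd huv'.1 (hne _ _)
  · rw [eq_of_mem_cyclicArcs hl.2.1 huv hj₀]
    exact List.mem_cons_of_mem _ (mem_attachedPath_inr i j₀)
  · rcases v with v | ⟨i', j''⟩
    · simp [huv'.1]
    · obtain ⟨rfl, -⟩ := huv'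
      exact List.mem_cons_of_mem _ (mem_attachedPath_inr i j'')

theorem length_le_of_isDirectedCycleList_attachPaths {m : ℕ} (hm : N + 2 ≤ m)
    (hR : ∀ l, IsDirectedCycleList R l → l.length ≤ m)
    (htail : ∀ i v, R (tail i) v → v = head i) (hne : ∀ i j, tail i ≠ head j)
    (l : List (V ⊕ ι × Fin N)) (hl : IsDirectedCycleList (attachPaths R tail head N) l) :
    l.length ≤ m := by
  by_cases hinr : ∃ i j, .inr (i, j) ∈ l
  · obtain ⟨i, j, hj⟩ := hinr
    refine (hl.length_le_of_subset (subset_of_inr_mem hl htail hne hj)).trans ?_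
    simpa only [attachedPath, List.length_cons, List.length_map, List.length_finRange] using hm
  · obtain ⟨l, rfl⟩ : l ∈ Set.range (List.map (Sum.inl : V → V ⊕ ι × Fin N)) := by
      rw [Set.range_list_map]
      rintro (u | ⟨i, j⟩) hx
      · exact ⟨u, rfl⟩
      · exact absurd ⟨i, j, hx⟩ hinr
    rw [List.length_map]
    exact hR l ((isDirectedCycleList_map Sum.inl_injective).mp hl)

/-- The detour of a vertex `v`: the path attached at `v` if `v` is one of the heads, and just
`v` otherwise. -/
noncomputable def detour (head : ι → V) (N : ℕ) : V → List (V ⊕ ι × Fin N) :=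
  Function.extend head (attachedPath head N) fun v ↦ [.inl v]

theorem detour_head (hinj : Function.Injective head) (i : ι) :
    detour head N (head i) = attachedPath head N i :=
  hinj.extend_apply _ _ i

theorem detour_of_notMem {v : V} (hv : v ∉ Set.range head) : detour head N v = [.inl v] :=
  Function.extend_apply' _ _ _ hv

theorem mem_detour (hinj : Function.Injective head) {x : V ⊕ ι × Fin N} {v : V} :
    x ∈ detour head N v ↔ x.elim id (head ∘ Prod.fst) = v := by
  by_cases hv : v ∈ Set.range head
  · obtain ⟨i, rfl⟩ := hv
    rw [detour_head hinj]
    rcases x with u | ⟨i', j⟩ <;> simp [attachedPath, hinj.eq_iff, eq_comm]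
  · rw [detour_of_notMem hv]
    rcases x with u | ⟨i', j⟩
    · simp
    · simpa using fun h ↦ hv ⟨i', h⟩

theorem head?_detour (hinj : Function.Injective head) (v : V) :
    (detour head N v).head? = some (.inl v) := by
  by_cases hv : v ∈ Set.range head
  · obtain ⟨i, rfl⟩ := hv
    simp [detour_head hinj, attachedPath]
  · simp [detour_of_notMem hv]

theorem nodup_detour (hinj : Function.Injective head) (v : V) : (detour head N v).Nodup := by
  by_cases hv : v ∈ Set.range head
  · obtain ⟨i, rfl⟩ := hv
    rw [detour_head hinj, attachedPath, List.nodup_cons]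
    exact ⟨by simp, (List.nodup_finRange N).map fun j j' h ↦ by simpa using h⟩
  · simp [detour_of_notMem hv]

theorem isChain_attachedPath_flipArcs (i : ι) :
    (attachedPath head N i).IsChain (flipArcs (attachPaths S tail head N) (c.map .inl)) := by
  rw [attachedPath, List.isChain_iff_getElem]
  rintro (_ | j) hj <;> simp [attachPaths, flipArcs_iff_of_notMem_right]

theorem isChain_detour_flipArcs (hinj : Function.Injective head) (v : V) :
    (detour head N v).IsChain (flipArcs (attachPaths S tail head N) (c.map .inl)) := by
  by_cases hv : v ∈ Set.range head
  · obtain ⟨i, rfl⟩ := hv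
    rw [detour_head hinj]
    exact isChain_attachedPath_flipArcs i
  · simp [detour_of_notMem hv]

theorem getLast?_attachedPath (i : ι) :
    (attachedPath head (N + 1) i).getLast? = some (.inr (i, Fin.last N)) := by
  simp [attachedPath, List.finRange_succ_last, List.getLast?_cons]

/-- The reversal of the cycle `c`, with each arc leaving a vertex `head i` replaced by the path
attached there. -/
noncomputable def reroute (head : ι → V) (N : ℕ) (c : List V) : List (V ⊕ ι × Fin N) :=
  c.reverse.flatMap (detour head N)

theorem mem_reroute (hinj : Function.Injective head) {x : V ⊕ ι × Fin N} :
    x ∈ reroute head N c ↔ x.elim id (head ∘ Prod.fst) ∈ c := by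
  simp [reroute, mem_detour hinj]

theorem nodup_reroute (hinj : Function.Injective head) (hc : c.Nodup) :
    (reroute head N c).Nodup := by
  refine List.nodup_flatMap.mpr ⟨fun v _ ↦ nodup_detour hinj v, ?_⟩
  refine (List.nodup_reverse.mpr hc).imp fun huv x hu hv ↦ huv ?_
  exact ((mem_detour hinj).mp hu).symm.trans ((mem_detour hinj).mp hv)

theorem card_mul_le_length_reroute [Fintype ι] (hinj : Function.Injective head)
    (hmem : ∀ i, head i ∈ c) : Fintype.card ι * (N + 1) ≤ (reroute head N c).length := by
  classical
  let f : ι ⊕ ι × Fin N → V ⊕ ι × Fin N := Sum.map head id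
  have hf : Function.Injective f := hinj.sumMap Function.injective_id
  have hsub : Finset.univ.image f ⊆ (reroute head N c).toFinset := by
    intro x hx
    obtain ⟨i | ⟨i, j⟩, -, rfl⟩ := Finset.mem_image.mp hx <;>
      simp [f, mem_reroute hinj, hmem]
  calc Fintype.card ι * (N + 1) = (Finset.univ.image f).card := by
        rw [Finset.card_image_of_injective _ hf]
        simp
        ring
    _ ≤ (reroute head N c).toFinset.card := Finset.card_le_card hsub
    _ ≤ (reroute head N c).length := List.toFinset_card_le _

theorem flipArcs_attachPaths_of_mem_getLast?_detour (hN : N ≠ 0) (hinj : Function.Injective head)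
    (hhead : ∀ i v, S v (head i) → v = tail i) {u v : V} (hS : S v u) (hc : (v, u) ∈ cyclicArcs c)
    {x : V ⊕ ι × Fin N} (hx : x ∈ (detour head N u).getLast?) :
    flipArcs (attachPaths S tail head N) (c.map .inl) x (.inl v) := by
  by_cases hu : u ∈ Set.range head
  · obtain ⟨i, rfl⟩ := hu
    obtain ⟨N, rfl⟩ := Nat.exists_eq_succ_of_ne_zero hN
    rw [detour_head hinj, getLast?_attachedPath, Option.mem_some_iff] at hx
    subst hx
    rw [flipArcs_iff_of_notMem_left (by simp)]
    exact ⟨hhead i v hS, by simp⟩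
  · rw [detour_of_notMem hu, List.getLast?_singleton, Option.mem_some_iff] at hx
    subst hx
    exact .inl (mem_cyclicArcs_map.mpr ⟨v, u, hc, rfl⟩)

theorem isDirectedCycleList_reroute (hN : N ≠ 0) (hinj : Function.Injective head)
    (hhead : ∀ i v, S v (head i) → v = tail i) (hc : IsDirectedCycleList S c) :
    IsDirectedCycleList (flipArcs (attachPaths S tail head N) (c.map .inl))
      (reroute head N c) := by
  refine isDirectedCycleList_flatMap (by simpa using hc.1)
    (fun v _ h ↦ by simpa [h] using head?_detour (N := N) hinj v)
    (nodup_reroute hinj hc.2.1) (fun v _ ↦ isChain_detour_flipArcs hinj v)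
    fun u v huv x hx y hy ↦ ?_
  rw [mem_cyclicArcs_reverse hc.2.1] at huv
  rw [head?_detour hinj, Option.mem_some_iff] at hy
  subst hy
  exact flipArcs_attachPaths_of_mem_getLast?_detour hN hinj hhead (hc.2.2 _ huv) huv hx

end AttachPaths

section Construction

variable {n : ℕ}

theorem isDirectedCycleList_finRotate (hn : 2 ≤ n) :
    IsDirectedCycleList (fun u v ↦ finRotate n u = v) (List.finRange n) := by
  refine ⟨by simpa using hn, List.nodup_finRange n, fun p hp ↦ ?_⟩
  obtain ⟨n, rfl⟩ : ∃ m, n = m + 1 := ⟨n - 1, by omega⟩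
  obtain ⟨i, hi, rfl⟩ := List.mem_iff_getElem.mp hp
  simp [Fin.ext_iff, Fin.val_add, List.getElem_rotate]

theorem asymm_finRotate (hn : 3 ≤ n) : Std.Asymm fun u v : Fin n ↦ finRotate n u = v := by
  obtain ⟨n, rfl⟩ : ∃ m, n = m + 1 := ⟨n - 1, by omega⟩
  refine ⟨fun u v huv hvu ↦ ?_⟩
  subst huv
  have hval := congrArg Fin.val hvu
  simp only [coe_finRotate, Fin.ext_iff, Fin.val_last] at hval
  split_ifs at hval <;> omega

theorem val_finProdFinEquiv_zero_add_one {r : ℕ} (i : Fin r) :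
    (finProdFinEquiv (i, (0 : Fin 2))).val + 1 = (finProdFinEquiv (i, (1 : Fin 2))).val := by
  simp [add_comm]

theorem finRotate_finProdFinEquiv_zero {r : ℕ} (i : Fin r) :
    finRotate (r * 2) (finProdFinEquiv (i, 0)) = finProdFinEquiv (i, 1) := by
  have := (finProdFinEquiv (i, (0 : Fin 2))).neZero
  ext
  rw [finRotate_apply, Fin.val_add_one_of_lt', val_finProdFinEquiv_zero_add_one]
  exact (val_finProdFinEquiv_zero_add_one i).trans_lt (Fin.isLt _)

/-- State of the construction after `t` flips, with `k = r + 1`: the digraph `R`, all of whose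
directed cycles have length at most `2 * k`, has been turned into `S`, which has the directed
cycle `c`. The construction continues at the arcs `tail i → head i`: in `R` no other arc leaves
`tail i`, and in `S` no other arc enters `head i`. -/
structure IsFlipStage {ι : Type*} (r t : ℕ) (R S : V → V → Prop) (c : List V)
    (tail head : ι → V) : Prop where
  asymm : Std.Asymm R
  length_le : ∀ l, IsDirectedCycleList R l → l.length ≤ (r + 1) * 2
  flipsTo : FlipsTo R t S
  isDirectedCycleList : IsDirectedCycleList S c
  eq_head : ∀ i v, R (tail i) v → v = head i
  eq_tail : ∀ i v, S v (head i) → v = tail i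
  tail_ne_head : ∀ i j, tail i ≠ head j
  head_injective : Function.Injective head
  head_mem : ∀ i, head i ∈ c

theorem isFlipStage_finRotate {r : ℕ} (hr : r ≠ 0) :
    IsFlipStage r 0 (fun u v ↦ finRotate ((r + 1) * 2) u = v)
      (fun u v ↦ finRotate ((r + 1) * 2) u = v) (List.finRange ((r + 1) * 2))
      (fun i ↦ finProdFinEquiv (i, 0)) (fun i ↦ finProdFinEquiv (i, 1)) where
  asymm := asymm_finRotate (by omega)
  length_le l hl := by simpa using hl.2.1.length_le_card
  flipsTo := .refl
  isDirectedCycleList := isDirectedCycleList_finRotate (by omega)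
  eq_head i v h := by rw [← h, finRotate_finProdFinEquiv_zero]
  eq_tail i v h := (finRotate _).injective (h.trans (finRotate_finProdFinEquiv_zero i).symm)
  tail_ne_head i j := by simp
  head_injective i j h := by simpa using h
  head_mem i := List.mem_finRange _

theorem IsFlipStage.extend {ι : Type*} {r t : ℕ} {R S : V → V → Prop} {c : List V}
    {tail head : ι → V} (h : IsFlipStage r t R S c tail head) (hr : r ≠ 0) :
    IsFlipStage r (t + 1) (attachPaths R tail head (r * 2))
      (flipArcs (attachPaths S tail head (r * 2)) (c.map .inl)) (reroute head (r * 2) c)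
      (fun p : ι × Fin r ↦ .inr (p.1, finProdFinEquiv (p.2, 0)))
      (fun p : ι × Fin r ↦ .inr (p.1, finProdFinEquiv (p.2, 1))) where
  asymm := have := h.asymm; attachPaths_asymm h.tail_ne_head
  length_le := length_le_of_isDirectedCycleList_attachPaths (by omega) h.length_le h.eq_head
    h.tail_ne_head
  flipsTo := h.flipsTo.attachPaths.flip
    ((isDirectedCycleList_map Sum.inl_injective).mpr h.isDirectedCycleList)
  isDirectedCycleList := isDirectedCycleList_reroute (by omega) h.head_injective h.eq_tail
    h.isDirectedCycleList
  eq_head p v hv := by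
    rcases v with v | ⟨i, j⟩
    · exact absurd ((val_finProdFinEquiv_zero_add_one p.2).symm.trans hv.2) (Fin.isLt _).ne
    · obtain ⟨rfl, hj⟩ := hv
      rw [Fin.ext (hj.symm.trans (val_finProdFinEquiv_zero_add_one p.2))]
  eq_tail p v hv := by
    rw [flipArcs_iff_of_notMem_right (by simp)] at hv
    rcases v with v | ⟨i, j⟩
    · exact absurd ((val_finProdFinEquiv_zero_add_one p.2).trans hv.2) (Nat.succ_ne_zero _)
    · obtain ⟨rfl, hj⟩ := hv
      rw [Fin.ext (Nat.succ_injective (hj.trans (val_finProdFinEquiv_zero_add_one p.2).symm))]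
  tail_ne_head p q := by simp
  head_injective p q hpq := by simpa [Prod.ext_iff] using hpq
  head_mem p := (mem_reroute h.head_injective).mpr (h.head_mem p.1)

theorem exists_isFlipStage {r : ℕ} (hr : r ≠ 0) (t : ℕ) :
    ∃ (V ι : Type) (_ : Fintype V) (_ : Fintype ι) (R S : V → V → Prop) (c : List V)
      (tail head : ι → V),
      IsFlipStage r t R S c tail head ∧ Fintype.card ι = (r + 1) * r ^ t := by
  induction t with
  | zero =>
    exact ⟨_, _, inferInstance, inferInstance, _, _, _, _, _, isFlipStage_finRotate hr, by simp⟩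
  | succ t ih =>
    obtain ⟨V, ι, _, _, R, S, c, tail, head, h, hcard⟩ := ih
    refine ⟨_, _, inferInstance, inferInstance, _, _, _, _, _, h.extend hr, ?_⟩
    rw [Fintype.card_prod, hcard, Fintype.card_fin, pow_succ, mul_assoc]

end Construction

/-- For all `k ≥ 2` and `t ≥ 1` there are a graph `G`, cycles
`C₁, …, C_t` and orientations `D₀, …, D_t` of `G`, each `D_i` obtained from
`D_{i-1}` by flipping the cycle `C_i` directed in `D_{i-1}`, such that every
directed cycle of `D₀` has length at most `2k` while `D_t` contains a directed
cycle of length at least `k·(k-1)^(t-1)·(2k-1)`. -/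
theorem flip_lemma_tightness (k t : ℕ) (hk : 2 ≤ k) (ht : 1 ≤ t) :
    ∃ (V : Type) (_ : Fintype V) (G : SimpleGraph V)
      (C : Fin t → Set (Sym2 V)) (D : Fin (t + 1) → GraphOrientation G),
      (∀ i : Fin t, (D i.castSucc).IsDirectedCycle (C i) ∧
        GraphOrientation.IsFlip (D i.castSucc) (D i.succ) (C i)) ∧
      (∀ K : Set (Sym2 V), (D 0).IsDirectedCycle K → K.ncard ≤ 2 * k) ∧
      (∃ K : Set (Sym2 V), (D (Fin.last t)).IsDirectedCycle K ∧
        k * (k - 1) ^ (t - 1) * (2 * k - 1) ≤ K.ncard) := by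
  obtain ⟨r, rfl⟩ := Nat.exists_eq_add_of_le' (one_le_two.trans hk)
  obtain ⟨t, rfl⟩ := Nat.exists_eq_add_of_le' ht
  have hr : r ≠ 0 := by omega
  obtain ⟨V, ι, _, _, R, S, c, tail, head, h, hcard⟩ := exists_isFlipStage hr t
  have h' := h.extend hr
  have := h'.asymm
  obtain ⟨C, D, hD₀, hD, hflip⟩ :=
    FlipsTo.exists_orientations (D₀ := .ofAsymm (attachPaths R tail head (r * 2))) h'.flipsTo
  refine ⟨_, inferInstance, _, C, D, hflip, fun K hK ↦ ?_, ?_⟩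
  · rw [hD₀] at hK
    obtain ⟨l, hl, hlen⟩ := hK.exists_list
    rw [← hlen, mul_comm 2]
    exact h'.length_le l hl
  · have hcycle := h'.isDirectedCycleList
    rw [← hD] at hcycle
    refine ⟨_, GraphOrientation.isDirectedCycle_cyclicEdges hcycle, ?_⟩
    rw [GraphOrientation.ncard_cyclicEdges hcycle]
    convert card_mul_le_length_reroute (N := r * 2) h.head_injective h.head_mem using 1
    rw [hcard, Nat.add_sub_cancel, Nat.add_sub_cancel, show 2 * (r + 1) - 1 = r * 2 + 1 by omega]
end
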